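/- Fix 1 ≤ p < ∞, m ∈ ℕ, n ∈ ℤ, and a non-quasianalytic weight function ω with Young conjugate φ*. The space O^m_{n,ω,p}(ℝ^N) of smooth functions f with r_{m,n,p}(f)^p := Σ_{α ∈ ℕ₀^N} ‖e^{−nω} ∂^α f‖_p^p · exp(−mp φ*(|α|/m)) < ∞ is a Banach space under the norm r_{m,n,p}. -/

import Mathlib

open MeasureTheory Real ENNReal Filter

noncomputable section

abbrev Euc (N : ℕ) := EuclideanSpace ℝ (Fin N)

/-- First-order partial derivative in direction `i`. -/
def pd {N : ℕ} (i : Fin N) (f : Euc N → ℂ) : Euc N → ℂ :=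
  fun x => fderiv ℝ f x (EuclideanSpace.single i (1:ℝ))

def pdPow {N : ℕ} (i : Fin N) : ℕ → (Euc N → ℂ) → (Euc N → ℂ)
  | 0, f => f
  | n+1, f => pd i (pdPow i n f)

/-- Multi-index partial derivative `∂^α f`. -/
def mderiv {N : ℕ} (α : Fin N → ℕ) (f : Euc N → ℂ) : Euc N → ℂ :=
  (List.finRange N).foldr (fun i g => pdPow i (α i) g) f

/-- Length `|α|` of a multi-index. -/
def msize {N : ℕ} (α : Fin N → ℕ) : ℕ := ∑ i, α i

/-- Weighted `L^p` norm `‖e^{w} g‖_p` (value in `ℝ≥0∞`). -/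
def wLp {N : ℕ} (p : ℝ≥0∞) (w : Euc N → ℝ) (g : Euc N → ℂ) : ℝ≥0∞ :=
  eLpNorm (fun x => Real.exp (w x) * ‖g x‖) p volume

def youngConj (φ : ℝ → ℝ) (s : ℝ) : ℝ :=
  sSup {y | ∃ t ≥ 0, y = s * t - φ t}

/-- Young conjugate `φ*` of `φ_ω = ω ∘ exp`. -/
def phiStar (ω : ℝ → ℝ) (s : ℝ) : ℝ :=
  youngConj (fun t => ω (Real.exp t)) s

/-- A non-quasianalytic weight function in the sense of Braun–Meise–Taylor. -/
structure IsWeightFun (ω : ℝ → ℝ) : Prop where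
  continuous : ContinuousOn ω (Set.Ici 0)
  mono : MonotoneOn ω (Set.Ici 0)
  nonneg : ∀ t, 0 ≤ t → 0 ≤ ω t
  alpha : ∃ K ≥ 1, ∀ t ≥ 0, ω (2*t) ≤ K * (1 + ω t)
  beta : IntegrableOn (fun t => ω t / (1 + t^2)) (Set.Ici 1)
  gamma : ∃ a b : ℝ, 0 < b ∧ ∀ t ≥ 0, a + b * Real.log (1+t) ≤ ω t
  delta : ConvexOn ℝ (Set.Ici 0) (fun t => ω (Real.exp t))
  vanish : ∀ t ∈ Set.Icc (0:ℝ) 1, ω t = 0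

/-- The norm `r_{m,n,p}` of the space `O^m_{n,ω,p}(ℝ^N)`. -/
def rnorm {N : ℕ} (ω : ℝ → ℝ) (m : ℕ) (n : ℤ) (p : ℝ) (f : Euc N → ℂ) : ℝ≥0∞ :=
  (∑' α : Fin N → ℕ,
    (wLp (ENNReal.ofReal p) (fun x => -((n : ℝ) * ω ‖x‖)) (mderiv α f)) ^ p *
      ENNReal.ofReal (Real.exp (-((m : ℝ) * p * phiStar ω ((msize α : ℝ) / m))))) ^ (1/p)

/-!
A function is recorded by its jet `(α, x) ↦ ∂^α f x`, so that `r_{m,n,p}` becomes a single `L^p`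
norm over `ℕ^N × ℝ^N` for a suitable measure: the triangle inequality and the Fatou property are
then those of `L^p`. Averaging over unit cubes, one coordinate at a time, bounds the supremum of
`∂^β f` on a cube by the `L¹` norms there of the `∂^(β + 1_S) f`, `S ⊆ {1, …, N}`. As the weights
are bounded below on cubes, all derivatives of a Cauchy sequence converge locally uniformly, which
produces a smooth limit `f`, and Fatou applied to `F j - F l` as `l → ∞` gives `F j → f` in norm.
-/

open scoped Topology

section PartialDerivatives

variable {N : ℕ} {f g : Euc N → ℂ}

lemma contDiff_pd (i : Fin N) (hf : ContDiff ℝ (⊤ : ℕ∞) f) : ContDiff ℝ (⊤ : ℕ∞) (pd i f) :=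
  (hf.fderiv_right (by simp)).clm_apply contDiff_const

lemma contDiff_pdPow (i : Fin N) (k : ℕ) (hf : ContDiff ℝ (⊤ : ℕ∞) f) :
    ContDiff ℝ (⊤ : ℕ∞) (pdPow i k f) := by
  induction k with
  | zero => exact hf
  | succ k ih => exact contDiff_pd i ih

lemma contDiff_foldr_pdPow (L : List (Fin N)) (α : Fin N → ℕ) (hf : ContDiff ℝ (⊤ : ℕ∞) f) :
    ContDiff ℝ (⊤ : ℕ∞) (L.foldr (fun i g => pdPow i (α i) g) f) := by
  induction L with
  | nil => exact hf
  | cons j L ih => exact contDiff_pdPow j _ ih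

lemma contDiff_mderiv (α : Fin N → ℕ) (hf : ContDiff ℝ (⊤ : ℕ∞) f) :
    ContDiff ℝ (⊤ : ℕ∞) (mderiv α f) :=
  contDiff_foldr_pdPow _ α hf

lemma pd_comm (i j : Fin N) (hf : ContDiff ℝ 2 f) : pd i (pd j f) = pd j (pd i f) := by
  ext x
  have hd : DifferentiableAt ℝ (fderiv ℝ f) x :=
    (hf.fderiv_right (m := 1) (by norm_num)).differentiable one_ne_zero x
  have hsymm : IsSymmSndFDerivAt ℝ f x :=
    hf.contDiffAt.isSymmSndFDerivAt (by rw [minSmoothness_of_isRCLikeNormedField])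
  unfold pd
  rw [fderiv_clm_apply hd (by fun_prop), fderiv_clm_apply hd (by fun_prop)]
  simpa using hsymm _ _

lemma pd_pdPow_comm (i j : Fin N) (k : ℕ) (hf : ContDiff ℝ (⊤ : ℕ∞) f) :
    pd i (pdPow j k f) = pdPow j k (pd i f) := by
  induction k with
  | zero => rfl
  | succ k ih =>
    calc pd i (pd j (pdPow j k f))
        = pd j (pd i (pdPow j k f)) :=
          pd_comm i j ((contDiff_pdPow j k hf).of_le (WithTop.coe_le_coe.2 le_top))
      _ = pd j (pdPow j k (pd i f)) := by rw [ih]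

lemma pd_foldr_pdPow {L : List (Fin N)} (hL : L.Nodup) {i : Fin N} (hi : i ∈ L)
    (α : Fin N → ℕ) (hf : ContDiff ℝ (⊤ : ℕ∞) f) :
    pd i (L.foldr (fun j g => pdPow j (α j) g) f) =
      L.foldr (fun j g => pdPow j ((α + Pi.single i 1 : Fin N → ℕ) j) g) f := by
  induction L with
  | nil => simp at hi
  | cons j L ih =>
    obtain ⟨hjL, hL⟩ := List.nodup_cons.1 hL
    simp only [List.foldr_cons]
    by_cases hij : j = i
    · subst hij
      have tail_eq : L.foldr (fun k g => pdPow k ((α + Pi.single j 1 : Fin N → ℕ) k) g) f =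
          L.foldr (fun k g => pdPow k (α k) g) f := by
        refine List.foldr_ext _ _ _ fun k hk g => ?_
        simp [Pi.single_eq_of_ne (ne_of_mem_of_not_mem hk hjL)]
      rw [tail_eq]
      simp [pdPow]
    · have hiL : i ∈ L := (List.mem_cons.1 hi).resolve_left (Ne.symm hij)
      rw [pd_pdPow_comm i j _ (contDiff_foldr_pdPow L α hf), ih hL hiL]
      simp [Pi.single_eq_of_ne hij]

lemma pd_mderiv (i : Fin N) (α : Fin N → ℕ) (hf : ContDiff ℝ (⊤ : ℕ∞) f) :
    pd i (mderiv α f) = mderiv (α + Pi.single i 1) f :=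
  pd_foldr_pdPow (List.nodup_finRange N) (List.mem_finRange i) α hf

lemma mderiv_zero (f : Euc N → ℂ) : mderiv 0 f = f :=
  List.foldr_fixed' (fun _ => rfl) _

lemma pdPow_of_pd_eq {G : (Fin N → ℕ) → Euc N → ℂ}
    (hG : ∀ i β, pd i (G β) = G (β + Pi.single i 1)) (i : Fin N) (k : ℕ) (β : Fin N → ℕ) :
    pdPow i k (G β) = G (β + Pi.single i k) := by
  induction k with
  | zero => simp [pdPow]
  | succ k ih =>
    calc pd i (pdPow i k (G β)) = G (β + Pi.single i k + Pi.single i 1) := by rw [ih, hG]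
      _ = G (β + Pi.single i (k + 1)) := by rw [add_assoc, ← Pi.single_add]

lemma mderiv_of_pd_eq {G : (Fin N → ℕ) → Euc N → ℂ}
    (hG : ∀ i β, pd i (G β) = G (β + Pi.single i 1)) (α β : Fin N → ℕ) :
    mderiv α (G β) = G (β + α) := by
  have foldr_eq (L : List (Fin N)) : L.foldr (fun i g => pdPow i (α i) g) (G β) =
      G (β + (L.map fun i => (Pi.single i (α i) : Fin N → ℕ)).sum) := by
    induction L with
    | nil => simp
    | cons j L ih =>
      rw [List.foldr_cons, ih, pdPow_of_pd_eq hG, List.map_cons, List.sum_cons, add_assoc,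
        add_comm (List.sum _)]
  rw [mderiv, foldr_eq, ← Fin.sum_univ_def, Finset.univ_sum_single]

lemma pd_sub (i : Fin N) (hf : Differentiable ℝ f) (hg : Differentiable ℝ g) :
    pd i (f - g) = pd i f - pd i g := by
  ext x
  simp [pd, fderiv_sub (hf x) (hg x)]

lemma mderiv_sub (α : Fin N → ℕ) (hf : ContDiff ℝ (⊤ : ℕ∞) f) (hg : ContDiff ℝ (⊤ : ℕ∞) g) :
    mderiv α (f - g) = mderiv α f - mderiv α g := by
  have pd_eq (i : Fin N) (β : Fin N → ℕ) : pd i (mderiv β f - mderiv β g) =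
      mderiv (β + Pi.single i 1) f - mderiv (β + Pi.single i 1) g := by
    rw [pd_sub i ((contDiff_mderiv β hf).differentiable (by simp))
      ((contDiff_mderiv β hg).differentiable (by simp)), pd_mderiv i β hf, pd_mderiv i β hg]
  simpa [mderiv_zero] using mderiv_of_pd_eq (G := fun β => mderiv β f - mderiv β g) pd_eq α 0

end PartialDerivatives

section LocallyUniformLimits

lemma exists_tendstoLocallyUniformly_of_uniformCauchySeqOn {X Y ι : Type*} [TopologicalSpace X]
    [UniformSpace Y] [CompleteSpace Y] {l : Filter ι} [l.NeBot] {F : ι → X → Y}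
    (hF : ∀ x, ∃ s ∈ 𝓝 x, UniformCauchySeqOn F l s) : ∃ f, TendstoLocallyUniformly F f l := by
  choose s hs hFs using hF
  choose f hf using fun x =>
    CompleteSpace.complete ((hFs x).cauchy_map (mem_of_mem_nhds (hs x)))
  exact ⟨f, fun u hu x =>
    ⟨s x, hs x, (hFs x).tendstoUniformlyOn_of_tendsto (fun y _ => hf y) u hu⟩⟩

lemma tendstoLocallyUniformly_pi {X ι κ : Type*} {Y : κ → Type*} [TopologicalSpace X]
    [∀ k, UniformSpace (Y k)] {l : Filter ι} {F : ι → X → ∀ k, Y k} {f : X → ∀ k, Y k} :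
    TendstoLocallyUniformly F f l ↔
      ∀ k, TendstoLocallyUniformly (fun j x => F j x k) (fun x => f x k) l := by
  simp only [tendstoLocallyUniformly_iff_forall_tendsto, Pi.uniformity, tendsto_iInf,
    tendsto_comap_iff, Function.comp_def]
  exact forall_comm

variable {N : ℕ}

/-- The linear map `v ↦ ∑ i, v i • c i` whose partial derivatives are the `c i`, as a continuous
linear function of `c`. -/
def fderivOfPartials (N : ℕ) (E : Type*) [NormedAddCommGroup E] [NormedSpace ℝ E] :
    (Fin N → E) →L[ℝ] Euc N →L[ℝ] E :=
  ∑ i, (ContinuousLinearMap.smulRightL ℝ (Euc N) E (EuclideanSpace.proj i)).comp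
    (ContinuousLinearMap.proj i)

lemma fderivOfPartials_apply {E : Type*} [NormedAddCommGroup E] [NormedSpace ℝ E] (c : Fin N → E)
    (v : Euc N) : fderivOfPartials N E c v = ∑ i, v i • c i := by
  simp [fderivOfPartials]

lemma fderivOfPartials_pd (f : Euc N → ℂ) (x : Euc N) :
    fderivOfPartials N ℂ (fun i => pd i f x) = fderiv ℝ f x := by
  ext v
  conv_rhs => rw [← (EuclideanSpace.basisFun (Fin N) ℝ).sum_repr v]
  simp [fderivOfPartials_apply, pd]

lemma pd_of_hasFDerivAt {f : Euc N → ℂ} {c : Fin N → ℂ} {x : Euc N}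
    (hf : HasFDerivAt f (fderivOfPartials N ℂ c) x) (i : Fin N) : pd i f x = c i := by
  simp [pd, hf.fderiv, fderivOfPartials_apply]

lemma contDiff_of_hasFDerivAt_fderivOfPartials {E : Type*} [NormedAddCommGroup E]
    [NormedSpace ℝ E] {G : (Fin N → ℕ) → Euc N → E}
    (hG : ∀ α x, HasFDerivAt (G α) (fderivOfPartials N E fun i => G (α + Pi.single i 1) x) x)
    (α : Fin N → ℕ) : ContDiff ℝ (⊤ : ℕ∞) (G α) := by
  have contDiff_nat (k : ℕ) (α : Fin N → ℕ) : ContDiff ℝ k (G α) := by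
    induction k generalizing α with
    | zero =>
      exact contDiff_zero.2 (continuous_iff_continuousAt.2 fun x => (hG α x).continuousAt)
    | succ k ih =>
      have fderiv_eq : fderiv ℝ (G α) =
          fun x => fderivOfPartials N E fun i => G (α + Pi.single i 1) x :=
        funext fun x => (hG α x).fderiv
      rw [Nat.cast_succ, contDiff_succ_iff_fderiv, fderiv_eq]
      exact ⟨fun x => (hG α x).differentiableAt, by simp,
        (fderivOfPartials N E).contDiff.comp (contDiff_pi.2 fun i => ih _)⟩
  exact contDiff_infty.2 fun k => contDiff_nat k α

lemma hasFDerivAt_of_tendstoLocallyUniformly_mderiv {ι : Type*} {l : Filter ι} [l.NeBot]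
    {F : ι → Euc N → ℂ} (hF : ∀ j, ContDiff ℝ (⊤ : ℕ∞) (F j)) {G : (Fin N → ℕ) → Euc N → ℂ}
    (hG : ∀ α, TendstoLocallyUniformly (fun j => mderiv α (F j)) (G α) l)
    (α : Fin N → ℕ) (x : Euc N) :
    HasFDerivAt (G α) (fderivOfPartials N ℂ fun i => G (α + Pi.single i 1) x) x := by
  have hasFDerivAt_mderiv (j : ι) (y : Euc N) : HasFDerivAt (mderiv α (F j))
      (fderivOfPartials N ℂ fun i => mderiv (α + Pi.single i 1) (F j) y) y := by
    simp only [← pd_mderiv _ _ (hF j), fderivOfPartials_pd]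
    exact ((contDiff_mderiv α (hF j)).differentiable (by simp) y).hasFDerivAt
  have tendsto_fderiv : TendstoLocallyUniformlyOn
      (fun j y => fderivOfPartials N ℂ fun i => mderiv (α + Pi.single i 1) (F j) y)
      (fun y => fderivOfPartials N ℂ fun i => G (α + Pi.single i 1) y) l Set.univ :=
    (fderivOfPartials N ℂ).uniformContinuous.comp_tendstoLocallyUniformlyOn
      (tendstoLocallyUniformlyOn_univ.2 (tendstoLocallyUniformly_pi.2 fun i => hG _))
  exact hasFDerivAt_of_tendstoLocallyUniformlyOn isOpen_univ tendsto_fderiv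
    (fun j y _ => hasFDerivAt_mderiv j y)
    (fun y hy => (tendstoLocallyUniformlyOn_univ.2 (hG α)).tendsto_at hy) (Set.mem_univ x)

theorem exists_contDiff_tendsto_mderiv {ι : Type*} {l : Filter ι} [l.NeBot]
    {F : ι → Euc N → ℂ} (hF : ∀ j, ContDiff ℝ (⊤ : ℕ∞) (F j))
    (hcauchy : ∀ α x, ∃ s ∈ 𝓝 x, UniformCauchySeqOn (fun j => mderiv α (F j)) l s) :
    ∃ f : Euc N → ℂ, ContDiff ℝ (⊤ : ℕ∞) f ∧
      ∀ α, TendstoLocallyUniformly (fun j => mderiv α (F j)) (mderiv α f) l := by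
  choose G hG using fun α => exists_tendstoLocallyUniformly_of_uniformCauchySeqOn (hcauchy α)
  have hG' := hasFDerivAt_of_tendstoLocallyUniformly_mderiv hF hG
  have mderiv_eq (α : Fin N → ℕ) : mderiv α (G 0) = G α := by
    simpa using mderiv_of_pd_eq (fun i β => funext fun x => pd_of_hasFDerivAt (hG' β x) i) α 0
  refine ⟨G 0, contDiff_of_hasFDerivAt_fderivOfPartials hG' 0, fun α => ?_⟩
  rw [mderiv_eq]
  exact hG α

end LocallyUniformLimits

section Sobolev

lemma enorm_le_setLIntegral_enorm_add_enorm_deriv {E : Type*} [NormedAddCommGroup E]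
    [NormedSpace ℝ E] {g : ℝ → E} (hg : ContDiff ℝ 1 g) {a x : ℝ} (hx : x ∈ Set.Icc a (a + 1)) :
    ‖g x‖ₑ ≤ ∫⁻ t in Set.Icc a (a + 1), (‖g t‖ₑ + ‖deriv g t‖ₑ) := by
  have volume_eq : volume (Set.Icc a (a + 1)) = 1 := by simp
  have increment_le {y z : ℝ} (hy : y ∈ Set.Icc a (a + 1)) (hz : z ∈ Set.Icc a (a + 1))
      (hyz : y ≤ z) : ‖g z - g y‖ₑ ≤ ∫⁻ t in Set.Icc a (a + 1), ‖deriv g t‖ₑ :=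
    (enorm_sub_le_lintegral_deriv_of_contDiffOn_Icc hg.contDiffOn hyz).trans
      (lintegral_mono_set (Set.Icc_subset_Icc hy.1 hz.2))
  have pointwise : ∀ y ∈ Set.Icc a (a + 1),
      ‖g x‖ₑ ≤ ‖g y‖ₑ + ∫⁻ t in Set.Icc a (a + 1), ‖deriv g t‖ₑ := fun y hy =>
    calc ‖g x‖ₑ = ‖g y + (g x - g y)‖ₑ := by rw [add_sub_cancel]
      _ ≤ ‖g y‖ₑ + ‖g x - g y‖ₑ := enorm_add_le _ _
      _ ≤ _ := by
        gcongr
        rcases le_total y x with hyx | hxy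
        · exact increment_le hy hx hyx
        · rw [enorm_sub_rev]
          exact increment_le hx hy hxy
  calc ‖g x‖ₑ = ∫⁻ _ in Set.Icc a (a + 1), ‖g x‖ₑ := by
        rw [setLIntegral_const, volume_eq, mul_one]
    _ ≤ ∫⁻ y in Set.Icc a (a + 1), (‖g y‖ₑ + ∫⁻ t in Set.Icc a (a + 1), ‖deriv g t‖ₑ) :=
      setLIntegral_mono' measurableSet_Icc pointwise
    _ = ∫⁻ t in Set.Icc a (a + 1), (‖g t‖ₑ + ‖deriv g t‖ₑ) := by
      rw [lintegral_add_right _ measurable_const,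
        lintegral_add_left hg.continuous.enorm.measurable, setLIntegral_const, volume_eq, mul_one]

-- Integrate out the coordinates in `s` one at a time; each one either leaves `u S` alone or
-- replaces it by `u (insert i S)`.
lemma le_sum_lmarginal_of_le_lintegral_update {ι : Type*} [DecidableEq ι] {X : ι → Type*}
    [∀ i, MeasurableSpace (X i)] {μ : ∀ i, Measure (X i)} [∀ i, SigmaFinite (μ i)]
    {I : ∀ i, Set (X i)} {u : Finset ι → (∀ i, X i) → ℝ≥0∞} (hu : ∀ S, Measurable (u S))
    (hI : ∀ S, ∀ i ∉ S, ∀ x, x i ∈ I i → u S x ≤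
      ∫⁻ t, (u S (Function.update x i t) + u (insert i S) (Function.update x i t)) ∂μ i)
    {s T : Finset ι} (hsT : Disjoint s T) {x : ∀ i, X i} (hx : ∀ i ∈ s, x i ∈ I i) :
    u T x ≤ ∑ S ∈ s.powerset, (∫⋯∫⁻_s, u (T ∪ S) ∂μ) x := by
  induction s using Finset.induction generalizing T x with
  | empty => simp
  | insert i s hi ih =>
    obtain ⟨hiT, hsT⟩ := Finset.disjoint_insert_left.1 hsT
    have hx' (t : X i) : ∀ j ∈ s, Function.update x i t j ∈ I j := fun j hj => by
      rw [Function.update_of_ne (ne_of_mem_of_not_mem hj hi)]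
      exact hx j (Finset.mem_insert_of_mem hj)
    have measurable_marginal (S : Finset ι) :
        Measurable fun t => (∫⋯∫⁻_s, u S ∂μ) (Function.update x i t) :=
      ((hu S).lmarginal μ).comp (measurable_update x)
    calc u T x
        ≤ ∫⁻ t, (u T (Function.update x i t) + u (insert i T) (Function.update x i t)) ∂μ i :=
          hI T i hiT x (hx i (Finset.mem_insert_self i s))
      _ ≤ ∫⁻ t, (∑ S ∈ s.powerset, (∫⋯∫⁻_s, u (T ∪ S) ∂μ) (Function.update x i t) +
            ∑ S ∈ s.powerset, (∫⋯∫⁻_s, u (insert i T ∪ S) ∂μ) (Function.update x i t)) ∂μ i := by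
          gcongr with t
          · exact ih hsT (hx' t)
          · exact ih (Finset.disjoint_insert_right.2 ⟨hi, hsT⟩) (hx' t)
      _ = ∑ S ∈ s.powerset, (∫⋯∫⁻_insert i s, u (T ∪ S) ∂μ) x +
            ∑ S ∈ s.powerset, (∫⋯∫⁻_insert i s, u (T ∪ insert i S) ∂μ) x := by
          rw [lintegral_add_left (Finset.measurable_fun_sum _ fun S _ => measurable_marginal _),
            lintegral_finsetSum _ fun S _ => measurable_marginal _,
            lintegral_finsetSum _ fun S _ => measurable_marginal _]
          simp only [lmarginal_insert _ (hu _) hi, Finset.insert_union, Finset.union_insert]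
      _ = ∑ S ∈ (insert i s).powerset, (∫⋯∫⁻_insert i s, u (T ∪ S) ∂μ) x :=
          (Finset.sum_powerset_insert hi _).symm

variable {N : ℕ} {f : Euc N → ℂ}

lemma hasDerivAt_comp_update (hf : Differentiable ℝ f) (i : Fin N) (x : Fin N → ℝ) (t : ℝ) :
    HasDerivAt (fun t => f (WithLp.toLp 2 (Function.update x i t)))
      (pd i f (WithLp.toLp 2 (Function.update x i t))) t :=
  (hf _).hasFDerivAt.comp_hasDerivAt t
    ((EuclideanSpace.equiv (Fin N) ℝ).symm.hasFDerivAt.comp_hasDerivAt t (hasDerivAt_update x i t))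

lemma enorm_le_setLIntegral_update (hf : ContDiff ℝ 1 f) {i : Fin N} {x : Fin N → ℝ} {a : ℝ}
    (hx : x i ∈ Set.Icc a (a + 1)) :
    ‖f (WithLp.toLp 2 x)‖ₑ ≤ ∫⁻ t in Set.Icc a (a + 1),
      (‖f (WithLp.toLp 2 (Function.update x i t))‖ₑ +
        ‖pd i f (WithLp.toLp 2 (Function.update x i t))‖ₑ) := by
  have hline : ContDiff ℝ 1 fun t => f (WithLp.toLp 2 (Function.update x i t)) :=
    hf.comp ((PiLp.contDiff_toLp).comp (contDiff_update 1 x i))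
  simpa [(hasDerivAt_comp_update (hf.differentiable one_ne_zero) i x _).deriv] using
    enorm_le_setLIntegral_enorm_add_enorm_deriv hline hx

/-- The multi-index of the mixed derivative taken once in each of the directions in `S`. -/
def mixedIndex (S : Finset (Fin N)) : Fin N → ℕ := ∑ i ∈ S, Pi.single i 1

lemma mixedIndex_empty : mixedIndex (∅ : Finset (Fin N)) = 0 :=
  Finset.sum_empty

lemma mixedIndex_insert {S : Finset (Fin N)} {i : Fin N} (hi : i ∉ S) :
    mixedIndex (insert i S) = mixedIndex S + Pi.single i 1 := by
  rw [mixedIndex, Finset.sum_insert hi, add_comm, mixedIndex]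

/-- The closed unit cube with lower corner `a`. -/
def unitCube (a : Fin N → ℝ) : Set (Euc N) := WithLp.ofLp ⁻¹' Set.Icc a (a + 1)

lemma isCompact_unitCube (a : Fin N → ℝ) : IsCompact (unitCube a) :=
  (EuclideanSpace.equiv (Fin N) ℝ).toHomeomorph.isCompact_preimage.2 isCompact_Icc

lemma volume_unitCube (a : Fin N → ℝ) : volume (unitCube a) = 1 := by
  rw [unitCube, (PiLp.volume_preserving_ofLp (Fin N)).measure_preimage
    measurableSet_Icc.nullMeasurableSet, Real.volume_Icc_pi]
  simp

lemma exists_unitCube_mem_nhds (x : Euc N) : ∃ a, unitCube a ∈ 𝓝 x :=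
  ⟨fun i => x i - 1 / 2, (PiLp.continuous_ofLp 2 _).continuousAt.preimage_mem_nhds
    (pi_Icc_mem_nhds (fun i => by linarith)
      (fun i => by simp only [Pi.add_apply, Pi.one_apply]; linarith))⟩

lemma setLIntegral_unitCube (a : Fin N → ℝ) (h : Euc N → ℝ≥0∞) :
    ∫⁻ y in unitCube a, h y =
      ∫⁻ y, h (WithLp.toLp 2 y) ∂Measure.pi fun i => volume.restrict (Set.Icc (a i) (a i + 1)) := by
  rw [← Measure.restrict_pi_pi, ← volume_pi, Set.pi_univ_Icc]
  exact ((PiLp.volume_preserving_toLp (Fin N)).setLIntegral_comp_preimage_emb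
    (MeasurableEquiv.toLp 2 _).measurableEmbedding h (unitCube a)).symm

theorem enorm_mderiv_le_sum_setLIntegral_unitCube (hf : ContDiff ℝ (⊤ : ℕ∞) f) (β : Fin N → ℕ)
    {a : Fin N → ℝ} {x : Euc N} (hx : x ∈ unitCube a) :
    ‖mderiv β f x‖ₑ ≤
      ∑ S : Finset (Fin N), ∫⁻ y in unitCube a, ‖mderiv (β + mixedIndex S) f y‖ₑ := by
  have measurable_mderiv (S : Finset (Fin N)) :
      Measurable fun y => ‖mderiv (β + mixedIndex S) f (WithLp.toLp 2 y)‖ₑ :=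
    ((contDiff_mderiv _ hf).continuous.comp (PiLp.continuous_toLp 2 _)).enorm.measurable
  have update_le (S : Finset (Fin N)) (i : Fin N) (hi : i ∉ S) (y : Fin N → ℝ)
      (hy : y i ∈ Set.Icc (a i) (a i + 1)) :
      ‖mderiv (β + mixedIndex S) f (WithLp.toLp 2 y)‖ₑ ≤ ∫⁻ t in Set.Icc (a i) (a i + 1),
        (‖mderiv (β + mixedIndex S) f (WithLp.toLp 2 (Function.update y i t))‖ₑ +
          ‖mderiv (β + mixedIndex (insert i S)) f (WithLp.toLp 2 (Function.update y i t))‖ₑ) := by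
    rw [mixedIndex_insert hi, ← add_assoc, ← pd_mderiv i _ hf]
    exact enorm_le_setLIntegral_update
      ((contDiff_mderiv _ hf).of_le (WithTop.coe_le_coe.2 le_top)) hy
  simpa [mixedIndex_empty, lmarginal_univ, setLIntegral_unitCube] using
    le_sum_lmarginal_of_le_lintegral_update measurable_mderiv update_le
      (Finset.disjoint_empty_right Finset.univ) (x := x.ofLp) fun i _ => ⟨hx.1 i, hx.2 i⟩

end Sobolev

section LocallyDominatesVolume

variable {X : Type*} [TopologicalSpace X] [T2Space X] [MeasureSpace X] [OpensMeasurableSpace X]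

/-- The measure `ν` bounds the volume from below on compact sets, up to constants. For a weight
`k > 0` and `ν = k dx` this says that `k` is locally essentially bounded away from zero. -/
def LocallyDominatesVolume (ν : Measure X) : Prop :=
  ∀ K : Set X, IsCompact K → ∃ C : ℝ≥0∞, C ≠ ⊤ ∧ volume.restrict K ≤ C • ν

lemma locallyDominatesVolume_withDensity {k : X → ℝ≥0∞} (hk : LowerSemicontinuous k)
    (hpos : ∀ x, k x ≠ 0) : LocallyDominatesVolume ((volume : Measure X).withDensity k) := by
  intro K hK
  rcases K.eq_empty_or_nonempty with rfl | hne
  · exact ⟨0, zero_ne_top, by simp⟩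
  obtain ⟨z, -, hz⟩ := hk.lowerSemicontinuousOn K |>.exists_isMinOn hne hK
  set c : ℝ≥0∞ := min 1 (k z)
  have hc : c ≠ 0 := by simp [c, hpos z]
  have hc' : c ≠ ⊤ := ne_top_of_le_ne_top one_ne_top (min_le_left _ _)
  have indicator_le : K.indicator 1 ≤ c⁻¹ • k := Set.indicator_le fun x hx =>
    calc (1 : ℝ≥0∞) = c⁻¹ * c := (ENNReal.inv_mul_cancel hc hc').symm
      _ ≤ c⁻¹ * k x := by
        gcongr
        exact (min_le_right _ _).trans (hz hx)
  refine ⟨c⁻¹, ENNReal.inv_ne_top.2 hc, ?_⟩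
  calc volume.restrict K = volume.withDensity (K.indicator 1) :=
        (withDensity_indicator_one hK.measurableSet).symm
    _ ≤ volume.withDensity (c⁻¹ • k) := withDensity_mono (ae_of_all _ indicator_le)
    _ = c⁻¹ • volume.withDensity k := withDensity_smul' _ _ (ENNReal.inv_ne_top.2 hc)

end LocallyDominatesVolume

lemma tendsto_zero_of_forall_lt_ofReal {ι : Type*} [Preorder ι] {d : ι → ι → ℝ≥0∞}
    (hd : ∀ ε : ℝ, 0 < ε → ∃ J, ∀ j ≥ J, ∀ l ≥ J, d j l < ENNReal.ofReal ε) :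
    Tendsto (fun q : ι × ι => d q.1 q.2) (atTop ×ˢ atTop) (𝓝 0) := by
  refine ENNReal.tendsto_nhds_zero.2 fun ε hε => ?_
  obtain ⟨δ, hδ, hδε⟩ := ENNReal.lt_iff_exists_nnreal_btwn.1 hε
  obtain ⟨J, hJ⟩ := hd δ (by exact_mod_cast hδ)
  filter_upwards [(eventually_ge_atTop J).prod_mk (eventually_ge_atTop J)] with q hq
  calc d q.1 q.2 ≤ ENNReal.ofReal δ := (hJ q.1 hq.1 q.2 hq.2).le
    _ = δ := ENNReal.ofReal_coe_nnreal
    _ ≤ ε := hδε.le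

section Jets

variable {N : ℕ} {p : ℝ≥0∞} {μ : (Fin N → ℕ) → Measure (Euc N)} {f g : Euc N → ℂ}

/-- All partial derivatives of `f`, as a single function of the multi-index and the point. -/
def jet (f : Euc N → ℂ) : (Fin N → ℕ) × Euc N → ℂ := fun z => mderiv z.1 f z.2

/-- The measure on pairs (multi-index, point) whose restriction to the slice `{α} × ℝ^N`
is `μ α`. -/
def jetMeasure (μ : (Fin N → ℕ) → Measure (Euc N)) : Measure ((Fin N → ℕ) × Euc N) :=
  Measure.sum fun α => (μ α).map (Prod.mk α)

/-- The `ℓ^p` norm over all multi-indices `α` of the norms of `∂^α f` in `L^p(μ α)`, encoded as one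
`L^p` norm of the jet of `f`. -/
def jetNorm (p : ℝ≥0∞) (μ : (Fin N → ℕ) → Measure (Euc N)) (f : Euc N → ℂ) : ℝ≥0∞ :=
  eLpNorm (jet f) p (jetMeasure μ)

lemma measurable_jet (hf : ContDiff ℝ (⊤ : ℕ∞) f) : Measurable (jet f) :=
  measurable_from_prod_countable_right fun α => (contDiff_mderiv α hf).continuous.measurable

lemma jet_sub (hf : ContDiff ℝ (⊤ : ℕ∞) f) (hg : ContDiff ℝ (⊤ : ℕ∞) g) :
    jet (f - g) = jet f - jet g :=
  funext fun z => congrFun (mderiv_sub z.1 hf hg) z.2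

lemma jetNorm_sub_le (hp : 1 ≤ p) (hf : ContDiff ℝ (⊤ : ℕ∞) f) (hg : ContDiff ℝ (⊤ : ℕ∞) g) :
    jetNorm p μ (f - g) ≤ jetNorm p μ f + jetNorm p μ g := by
  rw [jetNorm, jet_sub hf hg]
  exact eLpNorm_sub_le (measurable_jet hf).aestronglyMeasurable
    (measurable_jet hg).aestronglyMeasurable hp

lemma jetNorm_le_liminf {F : ℕ → Euc N → ℂ} (hF : ∀ j, ContDiff ℝ (⊤ : ℕ∞) (F j))
    (hlim : ∀ α x, Tendsto (fun j => mderiv α (F j) x) atTop (𝓝 (mderiv α f x))) :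
    jetNorm p μ f ≤ liminf (fun j => jetNorm p μ (F j)) atTop :=
  Lp.eLpNorm_lim_le_liminf_eLpNorm (fun j => (measurable_jet (hF j)).aestronglyMeasurable) _
    (ae_of_all _ fun z => hlim z.1 z.2)

lemma eLpNorm_mderiv_le_jetNorm (α : Fin N → ℕ) (f : Euc N → ℂ) :
    eLpNorm (mderiv α f) p (μ α) ≤ jetNorm p μ f :=
  calc eLpNorm (mderiv α f) p (μ α) = eLpNorm (jet f ∘ Prod.mk α) p (μ α) := rfl
    _ = eLpNorm (jet f) p ((μ α).map (Prod.mk α)) :=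
        (measurableEmbedding_prodMk_left α).eLpNorm_map_measure.symm
    _ ≤ jetNorm p μ f :=
        eLpNorm_mono_measure _ (Measure.le_sum (fun α => (μ α).map (Prod.mk α)) α)

lemma jetNorm_eq_tsum (hp : p ≠ 0) (hp' : p ≠ ⊤) (f : Euc N → ℂ) :
    jetNorm p μ f = (∑' α, eLpNorm (mderiv α f) p (μ α) ^ p.toReal) ^ (1 / p.toReal) := by
  have hp_toReal : p.toReal ≠ 0 := (ENNReal.toReal_pos hp hp').ne'
  rw [jetNorm, eLpNorm_eq_lintegral_rpow_enorm_toReal hp hp', jetMeasure, lintegral_sum_measure]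
  congr 1
  refine tsum_congr fun α => ?_
  rw [(measurableEmbedding_prodMk_left α).lintegral_map,
    eLpNorm_eq_lintegral_rpow_enorm_toReal hp hp', ← ENNReal.rpow_mul,
    one_div_mul_cancel hp_toReal, ENNReal.rpow_one]
  rfl

lemma exists_setLIntegral_mderiv_le_mul_jetNorm (hp : 1 ≤ p)
    {α : Fin N → ℕ} (hμ : LocallyDominatesVolume (μ α)) (a : Fin N → ℝ) :
    ∃ C : ℝ≥0∞, C ≠ ⊤ ∧ ∀ g : Euc N → ℂ, ContDiff ℝ (⊤ : ℕ∞) g →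
      ∫⁻ y in unitCube a, ‖mderiv α g y‖ₑ ≤ C * jetNorm p μ g := by
  obtain ⟨C, hC, hCμ⟩ := hμ _ (isCompact_unitCube a)
  have : IsProbabilityMeasure ((volume : Measure (Euc N)).restrict (unitCube a)) :=
    ⟨by rw [Measure.restrict_apply_univ, volume_unitCube]⟩
  refine ⟨C ^ (1 / p).toReal, ENNReal.rpow_ne_top_of_nonneg toReal_nonneg hC, fun g hg => ?_⟩
  calc ∫⁻ y in unitCube a, ‖mderiv α g y‖ₑ
      = eLpNorm (mderiv α g) 1 (volume.restrict (unitCube a)) :=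
        eLpNorm_one_eq_lintegral_enorm.symm
    _ ≤ eLpNorm (mderiv α g) p (volume.restrict (unitCube a)) :=
        eLpNorm_le_eLpNorm_of_exponent_le hp (contDiff_mderiv α hg).continuous.aestronglyMeasurable
    _ ≤ C ^ (1 / p).toReal * eLpNorm (mderiv α g) p (μ α) := eLpNorm_le_of_measure_le_smul hCμ
    _ ≤ C ^ (1 / p).toReal * jetNorm p μ g := by
        gcongr
        exact eLpNorm_mderiv_le_jetNorm α g

lemma exists_enorm_mderiv_le_mul_jetNorm (hp : 1 ≤ p) (hμ : ∀ α, LocallyDominatesVolume (μ α))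
    (β : Fin N → ℕ) (a : Fin N → ℝ) :
    ∃ C : ℝ≥0∞, C ≠ ⊤ ∧ ∀ g : Euc N → ℂ, ContDiff ℝ (⊤ : ℕ∞) g → ∀ x ∈ unitCube a,
      ‖mderiv β g x‖ₑ ≤ C * jetNorm p μ g := by
  choose C hC hCμ using fun S : Finset (Fin N) =>
    exists_setLIntegral_mderiv_le_mul_jetNorm hp (hμ (β + mixedIndex S)) a
  refine ⟨∑ S, C S, ENNReal.sum_ne_top.2 fun S _ => hC S, fun g hg x hx => ?_⟩
  calc ‖mderiv β g x‖ₑ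
      ≤ ∑ S : Finset (Fin N), ∫⁻ y in unitCube a, ‖mderiv (β + mixedIndex S) g y‖ₑ :=
        enorm_mderiv_le_sum_setLIntegral_unitCube hg β hx
    _ ≤ ∑ S, C S * jetNorm p μ g := Finset.sum_le_sum fun S _ => hCμ S g hg
    _ = (∑ S, C S) * jetNorm p μ g := (Finset.sum_mul ..).symm

lemma uniformCauchySeqOn_mderiv (hp : 1 ≤ p) (hμ : ∀ α, LocallyDominatesVolume (μ α))
    {ι : Type*} {l : Filter ι} {F : ι → Euc N → ℂ} (hF : ∀ j, ContDiff ℝ (⊤ : ℕ∞) (F j))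
    (hcauchy : Tendsto (fun q : ι × ι => jetNorm p μ (F q.1 - F q.2)) (l ×ˢ l) (𝓝 0))
    (β : Fin N → ℕ) (a : Fin N → ℝ) :
    UniformCauchySeqOn (fun j => mderiv β (F j)) l (unitCube a) := by
  obtain ⟨C, hC, hCμ⟩ := exists_enorm_mderiv_le_mul_jetNorm hp hμ β a
  have bound_tendsto :
      Tendsto (fun q : ι × ι => C * jetNorm p μ (F q.1 - F q.2)) (l ×ˢ l) (𝓝 0) := by
    simpa using ENNReal.Tendsto.const_mul hcauchy (Or.inr hC)
  intro u hu
  obtain ⟨ε, hε, hεu⟩ := mem_uniformity_edist.1 hu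
  filter_upwards [bound_tendsto.eventually_lt_const hε] with q hq x hx
  refine hεu (lt_of_le_of_lt ?_ hq)
  calc edist (mderiv β (F q.1) x) (mderiv β (F q.2) x) = ‖mderiv β (F q.1 - F q.2) x‖ₑ := by
        rw [mderiv_sub β (hF q.1) (hF q.2), Pi.sub_apply, edist_eq_enorm_sub]
    _ ≤ C * jetNorm p μ (F q.1 - F q.2) := hCμ _ ((hF q.1).sub (hF q.2)) x hx

lemma tendsto_jetNorm_sub_zero {F : ℕ → Euc N → ℂ} (hF : ∀ j, ContDiff ℝ (⊤ : ℕ∞) (F j))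
    (hf : ContDiff ℝ (⊤ : ℕ∞) f)
    (hlim : ∀ α x, Tendsto (fun j => mderiv α (F j) x) atTop (𝓝 (mderiv α f x)))
    (hcauchy : Tendsto (fun q : ℕ × ℕ => jetNorm p μ (F q.1 - F q.2)) (atTop ×ˢ atTop) (𝓝 0)) :
    Tendsto (fun j => jetNorm p μ (F j - f)) atTop (𝓝 0) := by
  have le_liminf (j : ℕ) :
      jetNorm p μ (F j - f) ≤ liminf (fun l => jetNorm p μ (F j - F l)) atTop :=
    jetNorm_le_liminf (fun l => (hF j).sub (hF l)) fun α x => by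
      simpa only [mderiv_sub α (hF j) (hF _), mderiv_sub α (hF j) hf, Pi.sub_apply] using
        tendsto_const_nhds.sub (hlim α x)
  refine ENNReal.tendsto_nhds_zero.2 fun ε hε => ?_
  filter_upwards [(ENNReal.tendsto_nhds_zero.1 hcauchy ε hε).curry] with j hj
  exact (le_liminf j).trans (liminf_le_of_frequently_le' hj.frequently)

theorem Omnp_complete_general (hp : 1 ≤ p) (hμ : ∀ α, LocallyDominatesVolume (μ α))
    (F : ℕ → Euc N → ℂ) (hsmooth : ∀ j, ContDiff ℝ (⊤ : ℕ∞) (F j))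
    (hfin : ∀ j, jetNorm p μ (F j) < ⊤)
    (hcauchy : ∀ ε : ℝ, 0 < ε → ∃ J : ℕ, ∀ j ≥ J, ∀ l ≥ J,
      jetNorm p μ (F j - F l) < ENNReal.ofReal ε) :
    ∃ f : Euc N → ℂ, ContDiff ℝ (⊤ : ℕ∞) f ∧ jetNorm p μ f < ⊤ ∧
      Tendsto (fun j => jetNorm p μ (F j - f)) atTop (𝓝 0) := by
  have hcauchy' := tendsto_zero_of_forall_lt_ofReal hcauchy
  obtain ⟨f, hf, hFf⟩ := exists_contDiff_tendsto_mderiv hsmooth fun α x =>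
    (exists_unitCube_mem_nhds x).imp' unitCube fun a ha =>
      ⟨ha, uniformCauchySeqOn_mderiv hp hμ hsmooth hcauchy' α a⟩
  have hlim : Tendsto (fun j => jetNorm p μ (F j - f)) atTop (𝓝 0) :=
    tendsto_jetNorm_sub_zero hsmooth hf (fun α x =>
      (tendstoLocallyUniformlyOn_univ.2 (hFf α)).tendsto_at (Set.mem_univ x)) hcauchy'
  obtain ⟨j, hj⟩ := (hlim.eventually_lt_const zero_lt_top).exists
  refine ⟨f, hf, ?_, hlim⟩
  calc jetNorm p μ f = jetNorm p μ (F j - (F j - f)) := by rw [_root_.sub_sub_cancel]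
    _ ≤ jetNorm p μ (F j) + jetNorm p μ (F j - f) :=
      jetNorm_sub_le hp (hsmooth j) ((hsmooth j).sub hf)
    _ < ⊤ := ENNReal.add_lt_top.2 ⟨hfin j, hj⟩

end Jets

section WeightedNorm

variable {N : ℕ} {p : ℝ} {ω : ℝ → ℝ}

lemma wLp_eq_eLpNorm_withDensity (hp : 0 < p) {w : Euc N → ℝ} (hw : Measurable w)
    (g : Euc N → ℂ) : wLp (ENNReal.ofReal p) w g = eLpNorm g (ENNReal.ofReal p)
      (volume.withDensity fun x => ENNReal.ofReal (Real.exp (p * w x))) := by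
  have hp_ne_zero : ENNReal.ofReal p ≠ 0 := by simpa using hp
  rw [wLp, eLpNorm_eq_lintegral_rpow_enorm_toReal hp_ne_zero ofReal_ne_top,
    eLpNorm_eq_lintegral_rpow_enorm_toReal hp_ne_zero ofReal_ne_top,
    lintegral_withDensity_eq_lintegral_mul_non_measurable _ (by fun_prop) (by simp),
    ENNReal.toReal_ofReal hp.le]
  congr 1
  refine lintegral_congr fun x => ?_
  rw [enorm_mul, enorm_norm, ENNReal.mul_rpow_of_nonneg _ _ hp.le,
    Real.enorm_eq_ofReal (Real.exp_pos _).le, ENNReal.ofReal_rpow_of_pos (Real.exp_pos _),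
    ← Real.exp_mul, mul_comm (w x), Pi.mul_apply]

lemma wLp_add_const (q : ℝ≥0∞) (w : Euc N → ℝ) (c : ℝ) (g : Euc N → ℂ) :
    wLp q (fun x => w x + c) g = ENNReal.ofReal (Real.exp c) * wLp q w g := by
  rw [wLp, wLp, ← Real.enorm_eq_ofReal (Real.exp_pos c).le, ← eLpNorm_const_smul]
  congr 1
  ext x
  rw [Real.exp_add, Pi.smul_apply, smul_eq_mul]
  ring

/-- The logarithm `-n ω(|x|) - m φ*(|α|/m)` of the weight that `r_{m,n,p}` puts on `∂^α f(x)`. -/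
def logWeight (ω : ℝ → ℝ) (m : ℕ) (n : ℤ) (α : Fin N → ℕ) (x : Euc N) : ℝ :=
  -(n * ω ‖x‖) + -(m * phiStar ω (msize α / m))

/-- The measures on `ℝ^N` for which `r_{m,n,p}` is the `ℓ^p` norm over `α` of the `L^p` norms of
`∂^α f`. -/
def weightMeasure (ω : ℝ → ℝ) (m : ℕ) (n : ℤ) (p : ℝ) (α : Fin N → ℕ) : Measure (Euc N) :=
  volume.withDensity fun x => ENNReal.ofReal (Real.exp (p * logWeight ω m n α x))

lemma continuous_logWeight (hω : ContinuousOn ω (Set.Ici 0)) (m : ℕ) (n : ℤ) (α : Fin N → ℕ) :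
    Continuous (logWeight ω m n α) := by
  have continuous_weight : Continuous fun x : Euc N => ω ‖x‖ :=
    hω.comp_continuous continuous_norm fun x => norm_nonneg x
  exact (continuous_const.mul continuous_weight).neg.add continuous_const

lemma locallyDominatesVolume_weightMeasure (hω : ContinuousOn ω (Set.Ici 0)) (m : ℕ) (n : ℤ)
    (p : ℝ) (α : Fin N → ℕ) : LocallyDominatesVolume (weightMeasure ω m n p α) :=
  locallyDominatesVolume_withDensity (ENNReal.continuous_ofReal.comp <| Real.continuous_exp.comp <|
      continuous_const.mul (continuous_logWeight hω m n α)).lowerSemicontinuous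
    fun x => by simp [Real.exp_pos]

lemma rnorm_eq_jetNorm (hω : ContinuousOn ω (Set.Ici 0)) (m : ℕ) (n : ℤ) (hp : 0 < p)
    (f : Euc N → ℂ) :
    rnorm ω m n p f = jetNorm (ENNReal.ofReal p) (weightMeasure ω m n p) f := by
  rw [jetNorm_eq_tsum (by simpa using hp) ofReal_ne_top, ENNReal.toReal_ofReal hp.le, rnorm]
  congr 1
  refine tsum_congr fun α => ?_
  rw [weightMeasure, ← wLp_eq_eLpNorm_withDensity hp (continuous_logWeight hω m n α).measurable]
  unfold logWeight
  rw [wLp_add_const, ENNReal.mul_rpow_of_nonneg _ _ hp.le,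
    ENNReal.ofReal_rpow_of_pos (Real.exp_pos _), ← Real.exp_mul, mul_comm]
  ring_nf

end WeightedNorm

/-- `(O^m_{n,ω,p}(ℝ^N), r_{m,n,p})` is a Banach space: every `r_{m,n,p}`-Cauchy sequence of
smooth functions with finite norm converges in norm to a smooth function with finite norm. -/
theorem Omnp_complete
    {N : ℕ} (ω : ℝ → ℝ) (hω : IsWeightFun ω)
    (m : ℕ) (hm : 0 < m) (n : ℤ) (p : ℝ) (hp : 1 ≤ p)
    (F : ℕ → Euc N → ℂ)
    (hsmooth : ∀ j, ContDiff ℝ (⊤ : ℕ∞) (F j))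
    (hfin : ∀ j, rnorm ω m n p (F j) < ⊤)
    (hcauchy : ∀ ε : ℝ, 0 < ε → ∃ J : ℕ, ∀ j ≥ J, ∀ l ≥ J,
      rnorm ω m n p (F j - F l) < ENNReal.ofReal ε) :
    ∃ f : Euc N → ℂ, ContDiff ℝ (⊤ : ℕ∞) f ∧ rnorm ω m n p f < ⊤ ∧
      Tendsto (fun j => rnorm ω m n p (F j - f)) atTop (nhds 0) := by
  simp only [rnorm_eq_jetNorm hω.continuous m n (one_pos.trans_le hp)] at hfin hcauchy ⊢
  exact Omnp_complete_general (by simpa using hp)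
    (locallyDominatesVolume_weightMeasure hω.continuous m n p) F hsmooth hfin hcauchy
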